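/- (Inversion relation for the q-Fourier kernel) For real r, r' with |r|, |r'| < 1, ∫_{-1}^{1} K_{ir}(x,y;q) K*_{ir'}(y,x';q) dy = K_{rr'}(x,x';q); consequently, for any finite linear combination f of the wave functions ψ_n, lim_{r,r'→1⁻} ∫_{-1}^{1} K*_{ir'}(x,y;q) ∫_{-1}^{1} K_{ir}(y,z;q) f(z) dz dy = f(x). -/

import Mathlib

open scoped Real

/-- The continuous q-Hermite polynomials of Rogers. -/
noncomputable def qHermite (q : ℝ) : ℕ → Polynomial ℝ
  | 0 => 1
  | 1 => Polynomial.C 2 * Polynomial.X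
  | (n + 2) => Polynomial.C 2 * Polynomial.X * qHermite q (n + 1)
      - Polynomial.C (1 - q ^ (n + 1)) * qHermite q n

/-- The q-Hermite weight function. -/
noncomputable def qWeight (q x : ℝ) : ℝ :=
  4 * Real.sqrt (1 - x ^ 2) *
    ∏' j : ℕ, (1 - 2 * (2 * x ^ 2 - 1) * q ^ (j + 1) + q ^ (2 * (j + 1)))

/-- The infinite q-Pochhammer symbol `(a;q)_∞ = ∏_{k=0}^∞ (1 - a q^k)`. -/
noncomputable def qPochInfA (a q : ℝ) : ℝ := ∏' k : ℕ, (1 - a * q ^ k)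

/-- The q-wave functions `ψ_n(x) = α d_n⁻¹ ρ(x)^{1/2} H_n(x|q)`, where
`α = ((1-q)/2)^{1/4}` and `d_n⁻¹ = ((q^{n+1};q)_∞ / (2π))^{1/2}`. -/
noncomputable def qWave (q : ℝ) (n : ℕ) (x : ℝ) : ℝ :=
  ((1 - q) / 2) ^ ((1 : ℝ) / 4) * Real.sqrt (qPochInfA (q ^ (n + 1)) q / (2 * π)) *
    Real.sqrt (qWeight q x) * (qHermite q n).eval x

/-- The q-Poisson kernel `K_t(x,y;q) = α⁻² Σ_{n=0}^∞ tⁿ ψ_n(x) ψ_n(y)`,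
with `α⁻² = ((1-q)/2)^{-1/2}`. -/
noncomputable def qKernel (q : ℝ) (t : ℂ) (x y : ℝ) : ℂ :=
  (Real.sqrt (2 / (1 - q)) : ℂ) *
    ∑' n : ℕ, t ^ n * (qWave q n x : ℂ) * (qWave q n y : ℂ)

/-!
All the kernels `K_t` are diagonal in the orthogonal system `ψ_n`, with eigenvalues `t ^ n`, so both
claims reduce to the orthogonality of the `q`-Hermite polynomials `H_n`. By the three-term
recurrence, orthogonality reduces in turn to `∫ H_n ρ = 0` for `n > 0`. Under `x = cos φ`,
`u = e^{2iφ}` this integral becomes a combination of constant terms of `u^{-k} h_n(u) θ(u)`, where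
`h_n` is the Rogers–Szegő polynomial and `θ(u) = (u;q)_∞ (q/u;q)_∞`. These vanish for `1 ≤ k ≤ n`,
by `h_{n+1}(u) = u h_n(u) + h_n(qu)` and the quasi-periodicity `θ(qu) = -u⁻¹ θ(u)`, which is read
off from the Laurent coefficients of finite products so that no contour has to be moved.
-/

open Filter Topology MeasureTheory Polynomial

section Pochhammer

/-- The finite `q`-Pochhammer symbol `(a;q)_n`. -/
def qPoch {R : Type*} [CommRing R] (a q : R) (n : ℕ) : R := ∏ k ∈ Finset.range n, (1 - a * q ^ k)

/-- The infinite `q`-Pochhammer symbol `(a;q)_∞` over an arbitrary topological ring; over `ℝ` it is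
`qPochInfA`. The product converges for `‖q‖ < 1`. -/
noncomputable def qPochInf {R : Type*} [CommRing R] [TopologicalSpace R] (a q : R) : R :=
  ∏' k : ℕ, (1 - a * q ^ k)

@[simp]
lemma qPoch_zero {R : Type*} [CommRing R] (a q : R) : qPoch a q 0 = 1 := Finset.prod_range_zero _

lemma qPoch_succ {R : Type*} [CommRing R] (a q : R) (n : ℕ) :
    qPoch a q (n + 1) = qPoch a q n * (1 - a * q ^ n) := Finset.prod_range_succ _ _

variable {𝕜 : Type*} [NormedField 𝕜] {q : 𝕜}

@[fun_prop]
lemma continuous_qPoch (q : 𝕜) (n : ℕ) : Continuous fun a => qPoch a q n := by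
  unfold qPoch
  fun_prop

lemma norm_qPoch_le (hq : ‖q‖ < 1) (a : 𝕜) (n : ℕ) :
    ‖qPoch a q n‖ ≤ Real.exp (‖a‖ / (1 - ‖q‖)) := calc
  ‖qPoch a q n‖ ≤ ∏ k ∈ Finset.range n, (1 + ‖a‖ * ‖q‖ ^ k) := by
    refine (Finset.norm_prod_le _ _).trans (Finset.prod_le_prod (by simp) fun k _ => ?_)
    simpa using norm_sub_le 1 (a * q ^ k)
  _ ≤ Real.exp (∑ k ∈ Finset.range n, ‖a‖ * ‖q‖ ^ k) :=
    Real.prod_one_add_le_exp_sum _ fun k => by positivity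
  _ ≤ Real.exp (‖a‖ / (1 - ‖q‖)) := by
    rw [← Finset.mul_sum, div_eq_mul_inv]
    gcongr
    rw [← tsum_geometric_of_lt_one (norm_nonneg q) hq]
    exact (summable_geometric_of_lt_one (norm_nonneg q) hq).sum_le_tsum _ fun k _ => by positivity

lemma summable_norm_neg_mul_pow (hq : ‖q‖ < 1) (a : 𝕜) : Summable fun k : ℕ => ‖-(a * q ^ k)‖ := by
  simpa using (summable_geometric_of_lt_one (norm_nonneg q) hq).mul_left ‖a‖

variable [CompleteSpace 𝕜]

lemma multipliable_one_sub_mul_pow (hq : ‖q‖ < 1) (a : 𝕜) :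
    Multipliable fun k : ℕ => 1 - a * q ^ k := by
  simpa only [sub_eq_add_neg] using
    multipliable_one_add_of_summable (summable_norm_neg_mul_pow hq a)

lemma tendsto_qPoch (hq : ‖q‖ < 1) (a : 𝕜) :
    Tendsto (qPoch a q) atTop (𝓝 (qPochInf a q)) :=
  (multipliable_one_sub_mul_pow hq a).tendsto_prod_tprod_nat

lemma norm_qPochInf_le (hq : ‖q‖ < 1) (a : 𝕜) : ‖qPochInf a q‖ ≤ Real.exp (‖a‖ / (1 - ‖q‖)) :=
  le_of_tendsto' (tendsto_qPoch hq a).norm (norm_qPoch_le hq a)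

lemma qPochInf_eq_mul (hq : ‖q‖ < 1) (a : 𝕜) :
    qPochInf a q = (1 - a) * qPochInf (a * q) q := by
  have h := tprod_eq_zero_mul' (f := fun k : ℕ => 1 - a * q ^ k)
    (by simpa only [pow_succ', mul_assoc] using multipliable_one_sub_mul_pow hq (a * q))
  simpa only [qPochInf, pow_succ', mul_assoc, pow_zero, mul_one] using h

lemma qPochInf_ne_zero (hq : ‖q‖ < 1) {a : 𝕜} (ha : ‖a‖ < 1) : qPochInf a q ≠ 0 := by
  have hfactor (k : ℕ) : 1 + -(a * q ^ k) ≠ 0 := by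
    rw [← sub_eq_add_neg, sub_ne_zero]
    refine fun h => lt_irrefl (1 : ℝ) ?_
    calc (1 : ℝ) = ‖a‖ * ‖q‖ ^ k := by rw [← norm_pow, ← norm_mul, ← h, norm_one]
      _ ≤ ‖a‖ := mul_le_of_le_one_right (norm_nonneg a) (pow_le_one₀ (norm_nonneg q) hq.le)
      _ < 1 := ha
  simpa only [qPochInf, sub_eq_add_neg] using
    tprod_one_add_ne_zero_of_summable hfactor (summable_norm_neg_mul_pow hq a)

@[fun_prop]
lemma continuous_qPochInf [LocallyCompactSpace 𝕜] (hq : ‖q‖ < 1) :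
    Continuous fun a => qPochInf a q := by
  refine continuous_iff_continuousAt.2 fun a => ?_
  have hle : ∀ k : ℕ, ∀ b ∈ Metric.ball (0 : 𝕜) (‖a‖ + 1),
      ‖-(b * q ^ k)‖ ≤ (‖a‖ + 1) * ‖q‖ ^ k := by
    intro k b hb
    rw [norm_neg, norm_mul, norm_pow]
    gcongr
    exact (mem_ball_zero_iff.1 hb).le
  have hprod := Summable.hasProdLocallyUniformlyOn_nat_one_add (Metric.isOpen_ball)
    ((summable_geometric_of_lt_one (norm_nonneg q) hq).mul_left (‖a‖ + 1))
    (Eventually.of_forall hle) (fun k => by fun_prop)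
  have hcont := hprod.tendstoLocallyUniformlyOn_finsetRange.continuousOn
    (Frequently.of_forall fun n => by fun_prop)
  simp only [← sub_eq_add_neg] at hcont
  exact hcont.continuousAt (Metric.isOpen_ball.mem_nhds (by simp))

end Pochhammer

section RealPochhammer

variable {q : ℝ}

lemma ofReal_qPochInf (hq : |q| < 1) (a : ℝ) :
    ((qPochInf a q : ℝ) : ℂ) = qPochInf (a : ℂ) (q : ℂ) := by
  have h := (multipliable_one_sub_mul_pow (𝕜 := ℝ) hq a).map_tprod Complex.ofRealHom
    Complex.continuous_ofReal
  simpa only [qPochInf, Complex.ofRealHom_eq_coe, Complex.ofReal_sub, Complex.ofReal_one,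
    Complex.ofReal_mul, Complex.ofReal_pow] using h

lemma qPochInf_pos (hq : |q| < 1) {a : ℝ} (ha : |a| < 1) : 0 < qPochInf a q := by
  have hfactor (k : ℕ) : 0 ≤ 1 - a * q ^ k := by
    have : |a * q ^ k| ≤ 1 := by
      rw [abs_mul, abs_pow]
      exact mul_le_one₀ ha.le (by positivity) (pow_le_one₀ (abs_nonneg q) hq.le)
    linarith [le_abs_self (a * q ^ k)]
  exact (qPochInf_ne_zero hq ha).symm.lt_of_le <|
    ge_of_tendsto' (tendsto_qPoch hq a) fun n => Finset.prod_nonneg fun k _ => hfactor k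

lemma qPochInf_le_one (hq0 : 0 ≤ q) (hq1 : q < 1) {a : ℝ} (ha0 : 0 ≤ a) (ha1 : a ≤ 1) :
    qPochInf a q ≤ 1 := by
  refine le_of_tendsto' (tendsto_qPoch (by rwa [Real.norm_of_nonneg hq0]) a) fun n =>
    Finset.prod_le_one (fun k _ => ?_) fun k _ => ?_
  · exact sub_nonneg.2 (mul_le_one₀ ha1 (by positivity) (pow_le_one₀ hq0 hq1.le))
  · exact sub_le_self 1 (by positivity)

end RealPochhammer

section RogersSzego

/-- The Rogers–Szegő polynomials `h_n(X|q) = ∑_k [n choose k]_q X^k`, encoded through the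
recursion `h_{n+1}(X) = X h_n(X) + h_n(qX)` so that no `q`-binomial coefficient is needed. -/
noncomputable def rogersSzego {R : Type*} [CommRing R] (q : R) : ℕ → R[X]
  | 0 => 1
  | n + 1 => X * rogersSzego q n + (rogersSzego q n).comp (C q * X)

section CommRing

variable {R : Type*} [CommRing R] (q : R)

@[simp]
lemma eval_rogersSzego_zero (u : R) : (rogersSzego q 0).eval u = 1 := eval_one

lemma eval_rogersSzego_succ (n : ℕ) (u : R) :
    (rogersSzego q (n + 1)).eval u
      = u * (rogersSzego q n).eval u + (rogersSzego q n).eval (q * u) := by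
  simp [rogersSzego]

lemma eval_rogersSzego_sub_eval_mul (n : ℕ) (u : R) :
    (rogersSzego q (n + 1)).eval u - (rogersSzego q (n + 1)).eval (q * u)
      = (1 - q ^ (n + 1)) * u * (rogersSzego q n).eval u := by
  induction n generalizing u with
  | zero => simp [eval_rogersSzego_succ]; ring
  | succ n ih =>
    linear_combination eval_rogersSzego_succ q (n + 1) u - eval_rogersSzego_succ q (n + 1) (q * u)
      + ih (q * u) + q * u * ih u - (1 - q ^ (n + 1)) * q * u * eval_rogersSzego_succ q n u

lemma eval_rogersSzego_add_two (n : ℕ) (u : R) :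
    (rogersSzego q (n + 2)).eval u
      = (1 + u) * (rogersSzego q (n + 1)).eval u
        - (1 - q ^ (n + 1)) * u * (rogersSzego q n).eval u := by
  linear_combination eval_rogersSzego_succ q (n + 1) u - eval_rogersSzego_sub_eval_mul q n u

end CommRing

lemma pow_mul_eval_qHermite (q : ℝ) {x : ℝ} {z w : ℂ} (hzw : z * w = 1) (hx : z + w = 2 * x)
    (n : ℕ) : z ^ n * ((qHermite q n).eval x : ℝ) = (rogersSzego (q : ℂ) n).eval (z ^ 2) := by
  induction n using Nat.twoStepInduction with
  | zero => simp [qHermite]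
  | one =>
    simp only [qHermite, eval_rogersSzego_succ, eval_mul, eval_C, eval_X, eval_rogersSzego_zero]
    push_cast
    linear_combination -z * hx + hzw
  | more n ih₀ ih₁ =>
    rw [eval_rogersSzego_add_two, ← ih₀, ← ih₁]
    simp only [qHermite, eval_sub, eval_mul, eval_C, eval_X]
    push_cast
    linear_combination z ^ (n + 1) * ((qHermite q (n + 1)).eval x : ℝ) * (hzw - z * hx)

section Bounds

variable {𝕜 : Type*} [NormedField 𝕜] {q : 𝕜}

/-- The claimed bound `A_j = 1 / (|q|^{j+1};|q|)_∞` satisfies `|q|^{j+1} A_j + A_{j+1} = A_j`. -/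
lemma norm_eval_rogersSzego_pow_mul_le (hq : ‖q‖ < 1) {u : 𝕜} (hu : ‖u‖ ≤ 1) (n j : ℕ) :
    ‖(rogersSzego q n).eval (q ^ (j + 1) * u)‖ ≤ (qPochInf (‖q‖ ^ (j + 1)) ‖q‖)⁻¹ := by
  have hnorm : ‖‖q‖‖ < 1 := by rwa [norm_norm]
  have hpow (j : ℕ) : ‖q‖ ^ (j + 1) < 1 := pow_lt_one₀ (norm_nonneg q) hq j.succ_ne_zero
  have hpos (j : ℕ) : 0 < qPochInf (‖q‖ ^ (j + 1)) ‖q‖ :=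
    qPochInf_pos hnorm (by rw [abs_of_nonneg (by positivity)]; exact hpow j)
  induction n generalizing j with
  | zero =>
    rw [eval_rogersSzego_zero, norm_one]
    exact (one_le_inv₀ (hpos j)).2
      (qPochInf_le_one (norm_nonneg q) hq (by positivity) (hpow j).le)
  | succ n ih =>
    have hrec : qPochInf (‖q‖ ^ (j + 1)) ‖q‖
        = (1 - ‖q‖ ^ (j + 1)) * qPochInf (‖q‖ ^ (j + 2)) ‖q‖ := by
      rw [qPochInf_eq_mul hnorm, ← pow_succ]
    rw [eval_rogersSzego_succ, ← mul_assoc q, ← pow_succ']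
    calc ‖q ^ (j + 1) * u * (rogersSzego q n).eval (q ^ (j + 1) * u)
          + (rogersSzego q n).eval (q ^ (j + 2) * u)‖
        ≤ ‖q‖ ^ (j + 1) * 1 * (qPochInf (‖q‖ ^ (j + 1)) ‖q‖)⁻¹
          + (qPochInf (‖q‖ ^ (j + 2)) ‖q‖)⁻¹ := by
          refine norm_add_le_of_le ?_ (ih (j + 1))
          rw [norm_mul, norm_mul, norm_pow]
          gcongr
          exact ih j
      _ = (qPochInf (‖q‖ ^ (j + 1)) ‖q‖)⁻¹ := by
          have := (hpos (j + 1)).ne'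
          have := sub_ne_zero.2 (hpow j).ne'
          rw [hrec]
          field_simp
          ring

lemma norm_eval_rogersSzego_le (hq : ‖q‖ < 1) {u : 𝕜} (hu : ‖u‖ ≤ 1) (n : ℕ) :
    ‖(rogersSzego q n).eval u‖ ≤ (n + 1) * (qPochInf ‖q‖ ‖q‖)⁻¹ := by
  have hle (n : ℕ) := norm_eval_rogersSzego_pow_mul_le hq hu n 0
  simp only [zero_add, pow_one] at hle
  induction n with
  | zero => simpa [rogersSzego] using hle 0
  | succ n ih =>
    rw [eval_rogersSzego_succ]
    calc ‖u * (rogersSzego q n).eval u + (rogersSzego q n).eval (q * u)‖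
        ≤ 1 * ((n + 1) * (qPochInf ‖q‖ ‖q‖)⁻¹) + (qPochInf ‖q‖ ‖q‖)⁻¹ := by
          refine norm_add_le_of_le ?_ (hle n)
          rw [norm_mul]
          gcongr
      _ = ((n + 1 : ℕ) + 1) * (qPochInf ‖q‖ ‖q‖)⁻¹ := by push_cast; ring

end Bounds

lemma exists_norm_eq_one_add_inv_eq_two_mul {x : ℝ} (hx : |x| ≤ 1) :
    ∃ z : ℂ, ‖z‖ = 1 ∧ z * z⁻¹ = 1 ∧ z + z⁻¹ = 2 * x := by
  obtain ⟨hx₀, hx₁⟩ := abs_le.1 hx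
  refine ⟨Complex.exp (Real.arccos x * Complex.I), Complex.norm_exp_ofReal_mul_I _,
    mul_inv_cancel₀ (Complex.exp_ne_zero _), ?_⟩
  rw [← Complex.exp_neg, ← neg_mul, ← Complex.two_cos, ← Complex.ofReal_cos,
    Real.cos_arccos hx₀ hx₁]

lemma abs_eval_qHermite_le {q : ℝ} (hq : |q| < 1) {x : ℝ} (hx : |x| ≤ 1) (n : ℕ) :
    |(qHermite q n).eval x| ≤ (n + 1) * (qPochInf |q| |q|)⁻¹ := by
  obtain ⟨z, hz, hzw, hzx⟩ := exists_norm_eq_one_add_inv_eq_two_mul hx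
  have h := norm_eval_rogersSzego_le (q := (q : ℂ)) (by simpa using hq) (u := z ^ 2)
    (by simp [hz]) n
  rwa [← pow_mul_eval_qHermite q hzw hzx, norm_mul, norm_pow, hz, one_pow, one_mul,
    Complex.norm_real, Complex.norm_real, Real.norm_eq_abs, Real.norm_eq_abs] at h

end RogersSzego

section Theta

lemma circleAverage_zpow (a : ℤ) :
    Real.circleAverage (fun u : ℂ => u ^ a) 0 1 = if a = 0 then 1 else 0 := by
  have hmul : ∀ u ∈ Metric.sphere (0 : ℂ) 1, (u - 0)⁻¹ • u ^ a = (u - 0) ^ (a - 1) := by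
    intro u hu
    rw [sub_zero, zpow_sub_one₀ (ne_zero_of_mem_unit_sphere ⟨u, hu⟩), smul_eq_mul, mul_comm]
  rw [Real.circleAverage_eq_circleIntegral one_ne_zero,
    circleIntegral.integral_congr zero_le_one hmul]
  split_ifs with ha
  · subst ha
    simp_rw [zero_sub, zpow_neg_one]
    rw [circleIntegral.integral_sub_center_inv 0 one_ne_zero, smul_eq_mul,
      inv_mul_cancel₀ Complex.two_pi_I_ne_zero]
  · rw [circleIntegral.integral_sub_zpow_of_ne (by omega), smul_zero]

lemma continuousOn_zpow_sphere (a : ℤ) :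
    ContinuousOn (fun u : ℂ => u ^ a) (Metric.sphere 0 1) :=
  (continuousOn_zpow₀ a).mono fun u hu => ne_zero_of_mem_unit_sphere ⟨u, hu⟩

lemma continuousOn_div_sphere (q : ℂ) : ContinuousOn (fun u : ℂ => q / u) (Metric.sphere 0 1) :=
  continuousOn_const.div continuousOn_id fun u hu => ne_zero_of_mem_unit_sphere ⟨u, hu⟩

/-- The `a`-th moment on the unit circle of the truncated theta function
`(u;q)_M (q/u;q)_N`, i.e. its Laurent coefficient at `u^{-a}`. -/
noncomputable def thetaMoment (q : ℂ) (M N : ℕ) (a : ℤ) : ℂ :=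
  Real.circleAverage (fun u => u ^ a * (qPoch u q M * qPoch (q / u) q N)) 0 1

section FiniteMoments

variable (q : ℂ) (M N : ℕ)

lemma circleIntegrable_zpow_mul_qPoch (a : ℤ) :
    CircleIntegrable (fun u => u ^ a * (qPoch u q M * qPoch (q / u) q N)) 0 1 :=
  ((continuousOn_zpow_sphere a).mul ((continuous_qPoch q M).continuousOn.mul
    ((continuous_qPoch q N).comp_continuousOn (continuousOn_div_sphere q)))).circleIntegrable
    zero_le_one

lemma thetaMoment_zero_zero (a : ℤ) : thetaMoment q 0 0 a = if a = 0 then 1 else 0 := by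
  simpa [thetaMoment] using circleAverage_zpow a

lemma thetaMoment_succ_left (a : ℤ) :
    thetaMoment q (M + 1) N a = thetaMoment q M N a - q ^ M * thetaMoment q M N (a + 1) := by
  simp only [thetaMoment, ← smul_eq_mul (q ^ M)]
  rw [← Real.circleAverage_fun_smul, ← Real.circleAverage_fun_sub
    (circleIntegrable_zpow_mul_qPoch q M N a)
    ((circleIntegrable_zpow_mul_qPoch q M N (a + 1)).const_fun_smul)]
  refine Real.circleAverage_congr_sphere fun u hu => ?_
  rw [abs_one] at hu
  simp only [qPoch_succ, smul_eq_mul, zpow_add_one₀ (ne_zero_of_mem_unit_sphere ⟨u, hu⟩)]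
  ring

lemma thetaMoment_succ_right (a : ℤ) :
    thetaMoment q M (N + 1) a = thetaMoment q M N a - q ^ (N + 1) * thetaMoment q M N (a - 1) := by
  simp only [thetaMoment, ← smul_eq_mul (q ^ (N + 1))]
  rw [← Real.circleAverage_fun_smul, ← Real.circleAverage_fun_sub
    (circleIntegrable_zpow_mul_qPoch q M N a)
    ((circleIntegrable_zpow_mul_qPoch q M N (a - 1)).const_fun_smul)]
  refine Real.circleAverage_congr_sphere fun u hu => ?_
  rw [abs_one] at hu
  simp only [qPoch_succ, smul_eq_mul, zpow_sub_one₀ (ne_zero_of_mem_unit_sphere ⟨u, hu⟩)]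
  ring

/-- The finite form of the quasi-periodicity `θ(qu) = -u⁻¹ θ(u)`. Writing the exponent as `j - k`
keeps every power of `q` nonnegative, so that `q = 0` is allowed. -/
lemma thetaMoment_recurrence (j k : ℕ) :
    (q ^ k - q ^ (M + j)) * thetaMoment q M N (j - k)
      + (q ^ j - q ^ (N + 1 + k)) * thetaMoment q M N (j - k - 1) = 0 := by
  induction M generalizing j k with
  | zero =>
    induction N generalizing j k with
    | zero =>
      simp only [thetaMoment_zero_zero]
      rcases eq_or_ne j k with rfl | hjk
      · simp
      · rcases eq_or_ne j (k + 1) with rfl | hjk'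
        · simp [add_comm]
        · rw [if_neg (by omega), if_neg (by omega)]
          ring
    | succ N ih =>
      have h := ih j (k + 1)
      rw [Nat.cast_succ, ← sub_sub] at h
      simp only [thetaMoment_succ_right]
      linear_combination ih j k - q ^ (N + 1) * h
  | succ M ih =>
    have h := ih (j + 1) k
    rw [Nat.cast_succ, add_sub_right_comm, add_sub_cancel_right] at h
    simp only [thetaMoment_succ_left, sub_add_cancel]
    linear_combination ih j k - q ^ M * h

lemma qPoch_mul_qPoch_mul_thetaMoment_zero :
    qPoch q q M * qPoch q q N * thetaMoment q M N 0 = qPoch q q (M + N) := by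
  induction N with
  | zero =>
    induction M with
    | zero => simp [thetaMoment_zero_zero]
    | succ M ih =>
      have h := thetaMoment_recurrence q M 0 1 0
      simp only [Nat.cast_one, Nat.cast_zero, sub_zero, pow_zero, zero_add, add_zero, pow_one,
        sub_self, zero_mul] at h
      simp only [qPoch_succ, thetaMoment_succ_left, qPoch_zero, add_zero, zero_add] at ih ⊢
      linear_combination (1 - q * q ^ M) * ih - qPoch q q M * q ^ M * h
  | succ N ih =>
    have h := thetaMoment_recurrence q M N 0 0
    simp only [Nat.cast_zero, sub_zero, pow_zero, add_zero] at h
    rw [← add_assoc, qPoch_succ, qPoch_succ, thetaMoment_succ_right]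
    linear_combination (1 - q * q ^ (M + N)) * ih
      - qPoch q q M * qPoch q q N * q ^ (N + 1) * h

end FiniteMoments

/-- The theta function `θ(u) = (u;q)_∞ (q/u;q)_∞`. -/
noncomputable def qTheta (q u : ℂ) : ℂ := qPochInf u q * qPochInf (q / u) q

/-- The linear functional `f ↦ (2π)⁻¹ ∫ f(e^{iφ}) θ(e^{iφ}) dφ`, i.e. the constant term of `f θ`. -/
noncomputable def thetaMean (q : ℂ) (f : ℂ → ℂ) : ℂ :=
  Real.circleAverage (fun u => f u * qTheta q u) 0 1

variable {q : ℂ}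

lemma continuousOn_qTheta (hq : ‖q‖ < 1) : ContinuousOn (qTheta q) (Metric.sphere 0 1) :=
  (continuous_qPochInf hq).continuousOn.mul
    ((continuous_qPochInf hq).comp_continuousOn (continuousOn_div_sphere q))

lemma tendsto_thetaMoment (hq : ‖q‖ < 1) (a : ℤ) :
    Tendsto (fun n => thetaMoment q n n a) atTop (𝓝 (thetaMean q fun u => u ^ a)) := by
  simp only [thetaMoment, thetaMean, Real.circleAverage]
  refine Tendsto.const_smul (intervalIntegral.tendsto_integral_filter_of_dominated_convergence
    (fun _ => Real.exp (1 / (1 - ‖q‖)) * Real.exp (‖q‖ / (1 - ‖q‖))) ?_ ?_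
    intervalIntegrable_const ?_) _
  · exact .of_forall fun n => (circleIntegrable_zpow_mul_qPoch q n n a).def'.aestronglyMeasurable
  · refine .of_forall fun n => .of_forall fun φ _ => ?_
    have h₁ := norm_qPoch_le hq (circleMap 0 1 φ) n
    have h₂ := norm_qPoch_le hq (q / circleMap 0 1 φ) n
    simp only [norm_div, norm_circleMap_zero, abs_one, div_one] at h₁ h₂
    simp only [norm_mul, norm_zpow, norm_circleMap_zero, abs_one, one_zpow, one_mul]
    gcongr
  · exact .of_forall fun φ _ => ((tendsto_qPoch hq _).mul (tendsto_qPoch hq _)).const_mul _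

lemma thetaMean_zpow_recurrence (hq : ‖q‖ < 1) (j k : ℕ) :
    q ^ j * thetaMean q (fun u => u ^ (j - k - 1 : ℤ))
      = -q ^ k * thetaMean q fun u => u ^ (j - k : ℤ) := by
  have hpow (c : ℕ → ℕ) (hc : Tendsto c atTop atTop) :
      Tendsto (fun n => q ^ c n) atTop (𝓝 0) :=
    (tendsto_pow_atTop_nhds_zero_of_norm_lt_one hq).comp hc
  have hlim := (((hpow (· + j) (tendsto_add_atTop_nat j)).const_sub (q ^ k)).mul
      (tendsto_thetaMoment hq (j - k))).add
    (((hpow (· + 1 + k) ((tendsto_add_atTop_nat k).comp (tendsto_add_atTop_nat 1))).const_sub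
      (q ^ j)).mul (tendsto_thetaMoment hq (j - k - 1)))
  simp only [thetaMoment_recurrence, sub_zero] at hlim
  linear_combination tendsto_nhds_unique hlim tendsto_const_nhds

lemma qPochInf_mul_thetaMean_one (hq : ‖q‖ < 1) :
    qPochInf q q * thetaMean q (fun _ => 1) = 1 := by
  have hlim := ((tendsto_qPoch hq q).mul (tendsto_qPoch hq q)).mul (tendsto_thetaMoment hq 0)
  simp only [qPoch_mul_qPoch_mul_thetaMoment_zero, zpow_zero] at hlim
  have heq := tendsto_nhds_unique hlim
    ((tendsto_qPoch hq q).comp (tendsto_id.atTop_add_atTop tendsto_id))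
  refine mul_left_cancel₀ (qPochInf_ne_zero hq hq) ?_
  linear_combination heq

lemma thetaMean_congr {f g : ℂ → ℂ} (h : Set.EqOn f g (Metric.sphere 0 1)) :
    thetaMean q f = thetaMean q g :=
  Real.circleAverage_congr_sphere fun u hu => congrArg (· * qTheta q u) (h (by simpa using hu))

lemma thetaMean_add (hq : ‖q‖ < 1) {f g : ℂ → ℂ} (hf : ContinuousOn f (Metric.sphere 0 1))
    (hg : ContinuousOn g (Metric.sphere 0 1)) :
    thetaMean q (fun u => f u + g u) = thetaMean q f + thetaMean q g := by
  simp only [thetaMean, add_mul]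
  exact Real.circleAverage_fun_add ((hf.mul (continuousOn_qTheta hq)).circleIntegrable zero_le_one)
    ((hg.mul (continuousOn_qTheta hq)).circleIntegrable zero_le_one)

lemma thetaMean_const_mul (c : ℂ) (f : ℂ → ℂ) :
    thetaMean q (fun u => c * f u) = c * thetaMean q f := by
  simp only [thetaMean, mul_assoc]
  exact Real.circleAverage_fun_smul (a := c)

lemma continuousOn_zpow_mul_eval (a : ℤ) (c : ℂ) (p : ℂ[X]) :
    ContinuousOn (fun u => u ^ a * p.eval (c * u)) (Metric.sphere 0 1) :=
  (continuousOn_zpow_sphere a).mul (p.continuous.comp (continuous_const_mul c)).continuousOn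

lemma thetaMean_zpow_mul_eval_mul (hq : ‖q‖ < 1) (p : ℂ[X]) (k : ℕ) :
    thetaMean q (fun u => u ^ (-(k : ℤ) - 1) * p.eval (q * u))
      = -q ^ k * thetaMean q fun u => u ^ (-(k : ℤ)) * p.eval u := by
  induction p using Polynomial.induction_on' with
  | add p r hp hr =>
    have hcont (a : ℤ) (p : ℂ[X]) := continuousOn_zpow_mul_eval a 1 p
    simp only [one_mul] at hcont
    simp only [eval_add, mul_add]
    rw [thetaMean_add hq (continuousOn_zpow_mul_eval _ q p) (continuousOn_zpow_mul_eval _ q r),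
      thetaMean_add hq (hcont _ p) (hcont _ r), hp, hr]
    ring
  | monomial j c =>
    have hleft : thetaMean q (fun u => u ^ (-(k : ℤ) - 1) * (monomial j c).eval (q * u))
        = c * q ^ j * thetaMean q fun u => u ^ (j - k - 1 : ℤ) := by
      rw [← thetaMean_const_mul]
      refine thetaMean_congr fun u hu => ?_
      have hu0 : u ≠ 0 := ne_zero_of_mem_unit_sphere ⟨u, hu⟩
      simp only [eval_monomial, mul_pow]
      rw [show (j - k - 1 : ℤ) = -(k : ℤ) - 1 + j by ring, zpow_add₀ hu0, zpow_natCast]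
      ring
    have hright : thetaMean q (fun u => u ^ (-(k : ℤ)) * (monomial j c).eval u)
        = c * thetaMean q fun u => u ^ (j - k : ℤ) := by
      rw [← thetaMean_const_mul]
      refine thetaMean_congr fun u hu => ?_
      have hu0 : u ≠ 0 := ne_zero_of_mem_unit_sphere ⟨u, hu⟩
      simp only [eval_monomial]
      rw [show (j - k : ℤ) = -(k : ℤ) + j by ring, zpow_add₀ hu0, zpow_natCast]
      ring
    rw [hleft, hright]
    linear_combination c * thetaMean_zpow_recurrence hq j k

lemma thetaMean_zpow_mul_rogersSzego_succ (hq : ‖q‖ < 1) (n k : ℕ) :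
    thetaMean q (fun u => u ^ (-(k : ℤ) - 1) * (rogersSzego q (n + 1)).eval u)
      = (1 - q ^ k) * thetaMean q fun u => u ^ (-(k : ℤ)) * (rogersSzego q n).eval u := by
  have hsplit : Set.EqOn (fun u => u ^ (-(k : ℤ) - 1) * (rogersSzego q (n + 1)).eval u)
      (fun u => u ^ (-(k : ℤ)) * (rogersSzego q n).eval (1 * u)
        + u ^ (-(k : ℤ) - 1) * (rogersSzego q n).eval (q * u)) (Metric.sphere 0 1) := by
    intro u hu
    have hu0 : u ≠ 0 := ne_zero_of_mem_unit_sphere ⟨u, hu⟩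
    simp only [eval_rogersSzego_succ, one_mul]
    rw [mul_add, ← mul_assoc, ← zpow_add_one₀ hu0, sub_add_cancel]
  rw [thetaMean_congr hsplit, thetaMean_add hq (continuousOn_zpow_mul_eval _ 1 _)
    (continuousOn_zpow_mul_eval _ q _), thetaMean_zpow_mul_eval_mul hq]
  simp only [one_mul]
  ring

lemma thetaMean_zpow_mul_rogersSzego_eq_zero (hq : ‖q‖ < 1) {n k : ℕ} (hk : k < n) :
    thetaMean q (fun u => u ^ (-(k : ℤ) - 1) * (rogersSzego q n).eval u) = 0 := by
  induction n generalizing k with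
  | zero => omega
  | succ n ih =>
    rw [thetaMean_zpow_mul_rogersSzego_succ hq]
    rcases k with _ | k
    · simp
    · rw [Nat.cast_succ, neg_add', ih (Nat.lt_of_succ_lt_succ hk), mul_zero]

end Theta

section Weight

variable {q : ℝ}

lemma normSq_one_sub_mul_circleMap (c φ : ℝ) :
    Complex.normSq (1 - c * circleMap 0 1 φ) = 1 - 2 * c * Real.cos φ + c ^ 2 := by
  rw [circleMap_zero, Complex.ofReal_one, one_mul, Complex.exp_mul_I, ← Complex.ofReal_cos,
    ← Complex.ofReal_sin, Complex.normSq_apply]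
  simp only [Complex.sub_re, Complex.one_re, Complex.mul_re, Complex.ofReal_re, Complex.add_re,
    Complex.I_re, mul_zero, Complex.ofReal_im, Complex.I_im, mul_one, sub_self, add_zero,
    Complex.add_im, Complex.mul_im, zero_mul, sub_zero, Complex.sub_im, Complex.one_im, zero_add,
    zero_sub, mul_neg, neg_mul, neg_neg]
  linear_combination c ^ 2 * Real.sin_sq_add_cos_sq φ

lemma qWeight_cos (hq : |q| < 1) (θ : ℝ) :
    qWeight q (Real.cos θ)
      = 4 * |Real.sin θ| * Complex.normSq (qPochInf (q * circleMap 0 1 (2 * θ)) q) := by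
  have hq' : ‖(q : ℂ)‖ < 1 := by simpa using hq
  rw [qWeight, ← Real.abs_sin_eq_sqrt_one_sub_cos_sq, qPochInf,
    (multipliable_one_sub_mul_pow hq' _).map_tprod Complex.normSq Complex.continuous_normSq]
  congr 1
  refine tprod_congr fun j => ?_
  have hfactor : (q : ℂ) * circleMap 0 1 (2 * θ) * q ^ j
      = (q ^ (j + 1) : ℝ) * circleMap 0 1 (2 * θ) := by
    push_cast
    ring
  rw [hfactor, normSq_one_sub_mul_circleMap, Real.cos_two_mul]
  ring

lemma qWeight_eq (hq : |q| < 1) (x : ℝ) :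
    qWeight q x
      = 4 * √(1 - x ^ 2) * Complex.normSq (qPochInf (q * circleMap 0 1 (2 * Real.arccos x)) q) := by
  rcases le_or_gt |x| 1 with hx | hx
  · obtain ⟨hx₀, hx₁⟩ := abs_le.1 hx
    rw [← Real.sin_arccos, ← abs_of_nonneg (Real.sin_nonneg_of_nonneg_of_le_pi
      (Real.arccos_nonneg x) (Real.arccos_le_pi x)), ← qWeight_cos hq, Real.cos_arccos hx₀ hx₁]
  · have hsqrt : √(1 - x ^ 2) = 0 :=
      Real.sqrt_eq_zero_of_nonpos (sub_nonpos.2 ((one_le_sq_iff_one_le_abs x).2 hx.le))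
    rw [qWeight, hsqrt, mul_zero, zero_mul, zero_mul]

lemma qWeight_neg (q x : ℝ) : qWeight q (-x) = qWeight q x := by simp only [qWeight, neg_sq]

lemma qWeight_eq_zero (q : ℝ) {x : ℝ} (hx : 1 ≤ |x|) : qWeight q x = 0 := by
  rw [qWeight, Real.sqrt_eq_zero_of_nonpos (sub_nonpos.2 ((one_le_sq_iff_one_le_abs x).2 hx)),
    mul_zero, zero_mul]

lemma qWeight_nonneg (hq : |q| < 1) (x : ℝ) : 0 ≤ qWeight q x := by
  rw [qWeight_eq hq]
  exact mul_nonneg (by positivity) (Complex.normSq_nonneg _)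

lemma qWeight_le (hq : |q| < 1) (x : ℝ) : qWeight q x ≤ 4 * Real.exp (|q| / (1 - |q|)) ^ 2 := by
  have hP := norm_qPochInf_le (q := (q : ℂ)) (by simpa using hq)
    (q * circleMap 0 1 (2 * Real.arccos x))
  rw [norm_mul, norm_circleMap_zero, abs_one, mul_one, Complex.norm_real, Real.norm_eq_abs] at hP
  have hsqrt : √(1 - x ^ 2) ≤ 1 := Real.sqrt_le_one.2 (by linarith [sq_nonneg x])
  rw [qWeight_eq hq, Complex.normSq_eq_norm_sq]
  calc 4 * √(1 - x ^ 2) * ‖qPochInf (q * circleMap 0 1 (2 * Real.arccos x)) (q : ℂ)‖ ^ 2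
      ≤ 4 * 1 * Real.exp (|q| / (1 - |q|)) ^ 2 := by gcongr
    _ = 4 * Real.exp (|q| / (1 - |q|)) ^ 2 := by rw [mul_one]

@[fun_prop]
lemma continuous_qWeight (hq : |q| < 1) : Continuous (qWeight q) := by
  have hP := continuous_qPochInf (q := (q : ℂ)) (by simpa using hq)
  rw [funext (qWeight_eq hq)]
  exact (by fun_prop : Continuous fun x : ℝ => 4 * √(1 - x ^ 2)).mul <|
    Complex.continuous_normSq.comp <| hP.comp <| by fun_prop

lemma ofReal_sin_mul_qWeight_cos (hq : |q| < 1) {θ : ℝ} (hθ : 0 ≤ Real.sin θ) :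
    ((qWeight q (Real.cos θ) * Real.sin θ : ℝ) : ℂ)
      = (1 - (circleMap 0 1 (2 * θ))⁻¹) * qTheta q (circleMap 0 1 (2 * θ)) := by
  have hq' : ‖(q : ℂ)‖ < 1 := by simpa using hq
  set u := circleMap 0 1 (2 * θ) with hu
  have hconj : (starRingEnd ℂ) u = u⁻¹ := by
    rw [Complex.inv_def, Complex.normSq_eq_norm_sq]
    simp [hu]
  have hsin : 4 * Real.sin θ ^ 2 = Complex.normSq (1 - u) := by
    have h := normSq_one_sub_mul_circleMap 1 (2 * θ)
    rw [Complex.ofReal_one, one_mul, Real.cos_two_mul] at h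
    rw [hu, h]
    linear_combination 4 * Real.sin_sq_add_cos_sq θ
  have hstar : (starRingEnd ℂ) (qPochInf u (q : ℂ)) = qPochInf u⁻¹ (q : ℂ) := by
    rw [qPochInf, (multipliable_one_sub_mul_pow hq' u).map_tprod _ Complex.continuous_conj]
    simp [qPochInf, hconj]
  have hnormSq : qWeight q (Real.cos θ) * Real.sin θ = Complex.normSq (qPochInf u (q : ℂ)) := by
    rw [qPochInf_eq_mul hq', map_mul, ← hsin, qWeight_cos hq, abs_of_nonneg hθ, mul_comm u, ← hu]
    ring
  rw [hnormSq, Complex.normSq_eq_conj_mul_self, hstar, qPochInf_eq_mul hq' u⁻¹, qTheta,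
    inv_mul_eq_div]
  ring

end Weight

section MomentFunctional

lemma integral_eq_integral_cos_mul_sin {f : ℝ → ℝ} (hf : Continuous f) :
    ∫ x in (-1 : ℝ)..1, f x = ∫ θ in (0 : ℝ)..π, f (Real.cos θ) * Real.sin θ := by
  have h := intervalIntegral.integral_comp_mul_deriv (a := 0) (b := π)
    (fun θ _ => Real.hasDerivAt_cos θ) (by fun_prop) hf
  simp only [Function.comp_apply, mul_neg, intervalIntegral.integral_neg, Real.cos_zero,
    Real.cos_pi] at h
  rw [intervalIntegral.integral_symm, ← h, neg_neg]

lemma integral_comp_circleMap_two_mul (g : ℂ → ℂ) :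
    ∫ θ in (0 : ℝ)..π, g (circleMap 0 1 (2 * θ)) = π * Real.circleAverage g 0 1 := by
  rw [intervalIntegral.integral_comp_mul_left (fun φ => g (circleMap 0 1 φ)) two_ne_zero, mul_zero,
    Real.circleAverage, Complex.real_smul, Complex.real_smul]
  have := Complex.ofReal_ne_zero.2 Real.pi_ne_zero
  push_cast
  field_simp

/-- The moment functional `p ↦ ∫_{-1}^1 p(x) ρ(x) dx` of the `q`-Hermite weight. -/
noncomputable def qMoment (q : ℝ) (p : ℝ[X]) : ℝ := ∫ x in (-1 : ℝ)..1, p.eval x * qWeight q x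

variable {q : ℝ}

lemma qMoment_add (hq : |q| < 1) (p r : ℝ[X]) : qMoment q (p + r) = qMoment q p + qMoment q r := by
  have hint (p : ℝ[X]) : IntervalIntegrable (fun x => p.eval x * qWeight q x) volume (-1) 1 :=
    (p.continuous.mul (continuous_qWeight hq)).intervalIntegrable _ _
  simp only [qMoment, eval_add, add_mul]
  exact intervalIntegral.integral_add (hint p) (hint r)

lemma qMoment_C_mul (q c : ℝ) (p : ℝ[X]) : qMoment q (C c * p) = c * qMoment q p := by
  simp only [qMoment, eval_mul, eval_C, mul_assoc, intervalIntegral.integral_const_mul]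

lemma ofReal_qMoment_qHermite_two_mul (hq : |q| < 1) (m : ℕ) :
    (qMoment q (qHermite q (2 * m)) : ℂ)
      = π * (thetaMean q (fun u => u ^ (-(m : ℤ)) * (rogersSzego (q : ℂ) (2 * m)).eval u)
        - thetaMean q fun u => u ^ (-(m : ℤ) - 1) * (rogersSzego (q : ℂ) (2 * m)).eval u) := by
  have hq' : ‖(q : ℂ)‖ < 1 := by simpa using hq
  have hint (a : ℤ) : CircleIntegrable
      (fun u => u ^ a * (rogersSzego (q : ℂ) (2 * m)).eval u * qTheta q u) 0 1 := by
    have h := continuousOn_zpow_mul_eval a 1 (rogersSzego (q : ℂ) (2 * m))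
    simp only [one_mul] at h
    exact (h.mul (continuousOn_qTheta hq')).circleIntegrable zero_le_one
  have hcont : Continuous fun x => (qHermite q (2 * m)).eval x * qWeight q x :=
    (qHermite q (2 * m)).continuous.mul (continuous_qWeight hq)
  rw [qMoment, integral_eq_integral_cos_mul_sin hcont, ← intervalIntegral.integral_ofReal,
    thetaMean, thetaMean, ← Real.circleAverage_fun_sub (hint _) (hint _),
    ← integral_comp_circleMap_two_mul]
  refine intervalIntegral.integral_congr fun θ hθ => ?_
  rw [Set.uIcc_of_le Real.pi_pos.le] at hθ
  set z := circleMap 0 1 θ with hz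
  have hz0 : z ≠ 0 := circleMap_ne_center one_ne_zero
  have hzsq : circleMap 0 1 (2 * θ) = z ^ 2 := by
    simp [hz, circleMap_zero, ← Complex.exp_nat_mul, mul_assoc]
  have hsum : z + z⁻¹ = 2 * Real.cos θ := by
    simp [hz, circleMap_zero, ← Complex.exp_neg, Complex.two_cos]
  have hH := pow_mul_eval_qHermite q (mul_inv_cancel₀ hz0) hsum (2 * m)
  have hW := ofReal_sin_mul_qWeight_cos hq (Real.sin_nonneg_of_mem_Icc hθ)
  rw [hzsq] at hW
  simp only [hzsq]
  rw [mul_assoc, Complex.ofReal_mul, hW, ← hH, zpow_sub_one₀ (pow_ne_zero 2 hz0), zpow_neg,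
    zpow_natCast, pow_mul]
  field_simp

lemma eval_neg_qHermite (q x : ℝ) (n : ℕ) :
    (qHermite q n).eval (-x) = (-1) ^ n * (qHermite q n).eval x := by
  induction n using Nat.twoStepInduction with
  | zero => simp [qHermite]
  | one => simp [qHermite]
  | more n ih₀ ih₁ =>
    simp only [qHermite, eval_sub, eval_mul, eval_C, eval_X, ih₀, ih₁]
    ring

lemma qMoment_qHermite_of_odd (q : ℝ) {n : ℕ} (hn : Odd n) : qMoment q (qHermite q n) = 0 := by
  have h := intervalIntegral.integral_comp_neg (a := -1) (b := 1)
    fun x => (qHermite q n).eval x * qWeight q x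
  simp only [eval_neg_qHermite, qWeight_neg, hn.neg_one_pow, neg_mul, one_mul, neg_neg,
    intervalIntegral.integral_neg] at h
  rw [qMoment]
  linarith

lemma qMoment_one (hq : |q| < 1) : qMoment q 1 = 2 * π / qPochInf q q := by
  have hq' : ‖(q : ℂ)‖ < 1 := by simpa using hq
  have h := ofReal_qMoment_qHermite_two_mul hq 0
  have hrec := thetaMean_zpow_recurrence hq' 0 0
  have hone := qPochInf_mul_thetaMean_one hq'
  simp only [mul_zero, qHermite, Nat.cast_zero, neg_zero, zpow_zero, eval_rogersSzego_zero, mul_one,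
    zero_sub, sub_zero, pow_zero, one_mul, neg_mul] at h hrec
  rw [eq_div_iff (qPochInf_pos hq hq).ne', ← Complex.ofReal_inj]
  push_cast
  rw [ofReal_qPochInf hq, h, hrec]
  linear_combination 2 * π * hone

lemma qMoment_qHermite_of_pos (hq : |q| < 1) {n : ℕ} (hn : 0 < n) :
    qMoment q (qHermite q n) = 0 := by
  have hq' : ‖(q : ℂ)‖ < 1 := by simpa using hq
  rcases n.even_or_odd' with ⟨m, rfl | rfl⟩
  · obtain ⟨m, rfl⟩ := Nat.exists_eq_succ_of_ne_zero (by omega : m ≠ 0)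
    have h₀ := thetaMean_zpow_mul_rogersSzego_eq_zero hq' (n := 2 * (m + 1)) (k := m) (by omega)
    have h₁ := thetaMean_zpow_mul_rogersSzego_eq_zero hq' (n := 2 * (m + 1)) (k := m + 1) (by omega)
    rw [← neg_add', ← Nat.cast_succ] at h₀
    rw [← Complex.ofReal_eq_zero, ofReal_qMoment_qHermite_two_mul hq, h₀, h₁, sub_zero, mul_zero]
  · exact qMoment_qHermite_of_odd q (odd_two_mul_add_one m)

end MomentFunctional

section Orthogonality

variable {q : ℝ}

/-- At `n = 0` the truncated index `n - 1` is harmless, because its coefficient `1 - q ^ 0`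
vanishes. -/
lemma two_X_mul_qHermite (q : ℝ) (n : ℕ) :
    C 2 * X * qHermite q n = qHermite q (n + 1) + C (1 - q ^ n) * qHermite q (n - 1) := by
  cases n <;> simp [qHermite]

lemma qMoment_qHermite_succ_mul (hq : |q| < 1) (m n : ℕ) :
    qMoment q (qHermite q (m + 1) * qHermite q n)
        + (1 - q ^ m) * qMoment q (qHermite q (m - 1) * qHermite q n)
      = qMoment q (qHermite q m * qHermite q (n + 1))
        + (1 - q ^ n) * qMoment q (qHermite q m * qHermite q (n - 1)) := by
  rw [← qMoment_C_mul, ← qMoment_C_mul, ← qMoment_add hq, ← qMoment_add hq]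
  congr 1
  linear_combination qHermite q m * two_X_mul_qHermite q n
    - qHermite q n * two_X_mul_qHermite q m

lemma qMoment_qHermite_mul_of_lt (hq : |q| < 1) {m n : ℕ} (hmn : m < n) :
    qMoment q (qHermite q m * qHermite q n) = 0 := by
  induction m using Nat.strong_induction_on generalizing n with
  | _ m ih =>
    rcases m with _ | m
    · simpa [qHermite] using qMoment_qHermite_of_pos hq hmn
    · have h := qMoment_qHermite_succ_mul hq m n
      rwa [ih m (by omega) (by omega), ih m (by omega) (by omega), ih (m - 1) (by omega) (by omega),
        mul_zero, mul_zero, add_zero, add_zero] at h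

lemma qMoment_qHermite_mul_self (hq : |q| < 1) (n : ℕ) :
    qMoment q (qHermite q n * qHermite q n) = 2 * π / qPochInf (q ^ (n + 1)) q := by
  induction n with
  | zero => simpa [qHermite] using qMoment_one hq
  | succ n ih =>
    have h := qMoment_qHermite_succ_mul hq n (n + 1)
    rw [Nat.add_sub_cancel, ih, qMoment_qHermite_mul_of_lt hq (by omega : n < n + 1 + 1),
      qMoment_qHermite_mul_of_lt hq (by omega : n - 1 < n + 1), mul_zero, add_zero, zero_add,
      qPochInf_eq_mul hq (q ^ (n + 1)), ← pow_succ] at h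
    have hpow : |q ^ (n + 1)| < 1 := by
      rw [abs_pow]
      exact pow_lt_one₀ (abs_nonneg q) hq n.succ_ne_zero
    have : 1 - q ^ (n + 1) ≠ 0 := by linarith [(abs_lt.1 hpow).2]
    rw [h]
    field_simp

end Orthogonality

section WaveFunctions

/-- The normalization constant `α d_n⁻¹` of the wave function `ψ_n`. -/
noncomputable def qWaveConst (q : ℝ) (n : ℕ) : ℝ :=
  ((1 - q) / 2) ^ (1 / 4 : ℝ) * √(qPochInf (q ^ (n + 1)) q / (2 * π))

lemma qWave_eq (q : ℝ) (n : ℕ) (x : ℝ) :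
    qWave q n x = qWaveConst q n * √(qWeight q x) * (qHermite q n).eval x := rfl

variable {q : ℝ}

lemma qPochInf_pow_succ_pos (hq : |q| < 1) (n : ℕ) : 0 < qPochInf (q ^ (n + 1)) q :=
  qPochInf_pos hq (abs_pow q _ ▸ pow_lt_one₀ (abs_nonneg q) hq n.succ_ne_zero)

lemma qWaveConst_mul_self (hq : |q| < 1) (n : ℕ) :
    qWaveConst q n * qWaveConst q n = √((1 - q) / 2) * (qPochInf (q ^ (n + 1)) q / (2 * π)) := by
  have hα : 0 ≤ (1 - q) / 2 := by linarith [(abs_lt.1 hq).2]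
  have hP : 0 ≤ qPochInf (q ^ (n + 1)) q / (2 * π) :=
    div_nonneg (qPochInf_pow_succ_pos hq n).le (by positivity)
  rw [qWaveConst, mul_mul_mul_comm, Real.mul_self_sqrt hP, Real.sqrt_eq_rpow,
    ← Real.rpow_add_of_nonneg hα (by norm_num) (by norm_num)]
  norm_num

lemma integral_qWave_mul_qWave (hq : |q| < 1) (m n : ℕ) :
    ∫ x in (-1 : ℝ)..1, qWave q m x * qWave q n x = if m = n then √((1 - q) / 2) else 0 := by
  have hmoment : ∫ x in (-1 : ℝ)..1, qWave q m x * qWave q n x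
      = qWaveConst q m * qWaveConst q n * qMoment q (qHermite q m * qHermite q n) := by
    rw [qMoment, ← intervalIntegral.integral_const_mul]
    refine intervalIntegral.integral_congr fun x _ => ?_
    simp only [qWave_eq, eval_mul]
    linear_combination (qWaveConst q m * qWaveConst q n * (qHermite q m).eval x
      * (qHermite q n).eval x) * Real.mul_self_sqrt (qWeight_nonneg hq x)
  rw [hmoment]
  rcases lt_trichotomy m n with hmn | rfl | hmn
  · rw [qMoment_qHermite_mul_of_lt hq hmn, mul_zero, if_neg hmn.ne]
  · have := (qPochInf_pow_succ_pos hq m).ne'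
    rw [qMoment_qHermite_mul_self hq, qWaveConst_mul_self hq, if_pos rfl]
    field_simp
  · rw [mul_comm (qHermite q m), qMoment_qHermite_mul_of_lt hq hmn, mul_zero, if_neg hmn.ne']

@[fun_prop]
lemma continuous_qWave (hq : |q| < 1) (n : ℕ) : Continuous (qWave q n) :=
  (continuous_const.mul (continuous_qWeight hq).sqrt).mul (qHermite q n).continuous

lemma abs_qWaveConst_le (hq : |q| < 1) (n : ℕ) :
    |qWaveConst q n| ≤ ((1 - q) / 2) ^ (1 / 4 : ℝ) * √(Real.exp (1 / (1 - |q|)) / (2 * π)) := by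
  have hα : 0 ≤ (1 - q) / 2 := by linarith [(abs_lt.1 hq).2]
  have hP : qPochInf (q ^ (n + 1)) q ≤ Real.exp (1 / (1 - |q|)) := by
    refine (Real.le_norm_self _).trans ((norm_qPochInf_le hq _).trans ?_)
    rw [norm_pow, Real.norm_eq_abs]
    have : 0 ≤ 1 - |q| := sub_nonneg.2 hq.le
    gcongr
    exact pow_le_one₀ (abs_nonneg q) hq.le
  rw [qWaveConst, abs_of_nonneg (by positivity)]
  gcongr

lemma exists_abs_qWave_le (hq : |q| < 1) : ∃ C, ∀ n x, |qWave q n x| ≤ C * (n + 1) := by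
  set A := ((1 - q) / 2) ^ (1 / 4 : ℝ) * √(Real.exp (1 / (1 - |q|)) / (2 * π))
  have hA (n : ℕ) : |qWaveConst q n| ≤ A := abs_qWaveConst_le hq n
  have hA0 : 0 ≤ A := (abs_nonneg _).trans (hA 0)
  set B := √(4 * Real.exp (|q| / (1 - |q|)) ^ 2)
  have hP : 0 < qPochInf |q| |q| := qPochInf_pos (by rwa [abs_abs]) (by rwa [abs_abs])
  refine ⟨A * B * (qPochInf |q| |q|)⁻¹, fun n x => ?_⟩
  rcases le_or_gt |x| 1 with hx | hx
  · have hB : √(qWeight q x) ≤ B := Real.sqrt_le_sqrt (qWeight_le hq x)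
    rw [qWave_eq, abs_mul, abs_mul, abs_of_nonneg (Real.sqrt_nonneg _)]
    calc |qWaveConst q n| * √(qWeight q x) * |(qHermite q n).eval x|
        ≤ A * B * ((n + 1) * (qPochInf |q| |q|)⁻¹) := by
          gcongr
          exacts [hA n, abs_eval_qHermite_le hq hx n]
      _ = A * B * (qPochInf |q| |q|)⁻¹ * (n + 1) := by ring
  · rw [qWave_eq, qWeight_eq_zero q hx.le, Real.sqrt_zero, mul_zero, zero_mul, abs_zero]
    positivity

end WaveFunctions

section Kernel

lemma summable_pow_mul_mul_succ_sq {r : ℝ} (hr : |r| < 1) (c : ℝ) :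
    Summable fun n : ℕ => r ^ n * (c * (n + 1)) ^ 2 := by
  have hr' : ‖r‖ < 1 := hr
  refine (((summable_pow_mul_geometric_of_norm_lt_one 2 hr').add
    ((summable_pow_mul_geometric_of_norm_lt_one 1 hr').mul_left 2)).add
    (summable_geometric_of_norm_lt_one hr')).mul_left (c ^ 2) |>.congr fun n => ?_
  ring

variable {q : ℝ} {t : ℂ}

lemma exists_summable_qKernel_bound (hq : |q| < 1) (ht : ‖t‖ < 1) :
    ∃ b : ℕ → ℝ, Summable b ∧
      ∀ n x y, ‖t ^ n * (qWave q n x : ℂ) * (qWave q n y : ℂ)‖ ≤ b n := by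
  obtain ⟨C, hC⟩ := exists_abs_qWave_le hq
  refine ⟨_, summable_pow_mul_mul_succ_sq ((abs_norm t).symm ▸ ht) C, fun n x y => ?_⟩
  rw [norm_mul, norm_mul, norm_pow, Complex.norm_real, Complex.norm_real, mul_assoc, sq]
  gcongr
  · exact (abs_nonneg _).trans (hC n x)
  exacts [hC n x, hC n y]

lemma continuous_qKernel (hq : |q| < 1) (ht : ‖t‖ < 1) (x : ℝ) : Continuous (qKernel q t x) := by
  obtain ⟨b, hb, hle⟩ := exists_summable_qKernel_bound hq ht
  exact continuous_const.mul (continuous_tsum (fun n => by fun_prop) hb fun n y => hle n x y)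

lemma qKernel_comm (q : ℝ) (t : ℂ) (x y : ℝ) : qKernel q t x y = qKernel q t y x := by
  simp only [qKernel, mul_right_comm]

lemma conj_qKernel (q : ℝ) (t : ℂ) (x y : ℝ) :
    (starRingEnd ℂ) (qKernel q t x y) = qKernel q ((starRingEnd ℂ) t) x y := by
  simp only [qKernel, map_mul, map_pow, Complex.conj_ofReal, Complex.conj_tsum]

lemma integral_qKernel_mul (hq : |q| < 1) (ht : ‖t‖ < 1) (x : ℝ) {g : ℝ → ℂ}
    (hg : Continuous g) :
    ∫ y in (-1 : ℝ)..1, qKernel q t x y * g y = √(2 / (1 - q)) *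
      ∑' n, t ^ n * qWave q n x * ∫ y in (-1 : ℝ)..1, qWave q n y * g y := by
  obtain ⟨b, hb, hle⟩ := exists_summable_qKernel_bound hq ht
  have hsum := intervalIntegral.hasSum_integral_of_dominated_convergence
    (μ := volume) (a := -1) (b := 1)
    (F := fun n y => t ^ n * (qWave q n x : ℂ) * (qWave q n y : ℂ) * g y)
    (f := fun y => (∑' n, t ^ n * (qWave q n x : ℂ) * (qWave q n y : ℂ)) * g y)
    (fun n y => b n * ‖g y‖)
    (fun n => Continuous.aestronglyMeasurable (by fun_prop))
    (fun n => .of_forall fun y _ => by rw [norm_mul]; gcongr; exact hle n x y)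
    (.of_forall fun y _ => hb.mul_right _)
    (by simp only [tsum_mul_right]; exact (hg.norm.const_mul _).intervalIntegrable _ _)
    (.of_forall fun y _ => (Summable.of_norm_bounded hb fun n => hle n x y).hasSum.mul_right _)
  simp only [mul_assoc, intervalIntegral.integral_const_mul] at hsum ⊢
  rw [hsum.tsum_eq, ← intervalIntegral.integral_const_mul]
  simp only [qKernel, mul_assoc]

lemma integral_qKernel_mul_qWave (hq : |q| < 1) (ht : ‖t‖ < 1) (x : ℝ) (m : ℕ) :
    ∫ y in (-1 : ℝ)..1, qKernel q t x y * qWave q m y = t ^ m * qWave q m x := by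
  have horth (n : ℕ) : ∫ y in (-1 : ℝ)..1, (qWave q n y : ℂ) * qWave q m y
      = if n = m then (√((1 - q) / 2) : ℂ) else 0 := by
    simp only [← Complex.ofReal_mul]
    rw [intervalIntegral.integral_ofReal, integral_qWave_mul_qWave hq]
    split_ifs <;> simp
  have hα : (√(2 / (1 - q)) : ℂ) * √((1 - q) / 2) = 1 := by
    have : 0 < 1 - q := by linarith [(abs_lt.1 hq).2]
    rw [← Complex.ofReal_mul, ← Real.sqrt_mul (by positivity), div_mul_div_cancel₀ this.ne',
      div_self two_ne_zero, Real.sqrt_one, Complex.ofReal_one]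
  rw [integral_qKernel_mul hq ht x (by fun_prop),
    tsum_eq_single m fun n hn => by rw [horth, if_neg hn, mul_zero], horth, if_pos rfl]
  linear_combination (t ^ m * (qWave q m x : ℂ)) * hα

lemma integral_qKernel_mul_qKernel (hq : |q| < 1) {s : ℂ} (hs : ‖s‖ < 1) (ht : ‖t‖ < 1)
    (x x' : ℝ) :
    ∫ y in (-1 : ℝ)..1, qKernel q s x y * qKernel q t y x' = qKernel q (s * t) x x' := by
  simp only [qKernel_comm q t _ x']
  rw [integral_qKernel_mul hq hs x (continuous_qKernel hq ht x'), qKernel]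
  congr 1
  refine tsum_congr fun n => ?_
  simp only [mul_comm (qWave q n _ : ℂ) (qKernel q t x' _), integral_qKernel_mul_qWave hq ht]
  ring

lemma integral_qKernel_mul_sum (hq : |q| < 1) (ht : ‖t‖ < 1) (x : ℝ) (s : Finset ℕ) (c : ℕ → ℂ) :
    ∫ y in (-1 : ℝ)..1, qKernel q t x y * ∑ n ∈ s, c n * qWave q n y
      = ∑ n ∈ s, c n * t ^ n * qWave q n x := by
  have hK := continuous_qKernel hq ht x
  simp only [Finset.mul_sum, mul_left_comm (qKernel q t x _)]
  rw [intervalIntegral.integral_finsetSum fun n _ =>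
    Continuous.intervalIntegrable (by fun_prop) _ _]
  simp only [intervalIntegral.integral_const_mul, integral_qKernel_mul_qWave hq ht, mul_assoc]

lemma I_mul_mul_conj_I_mul (r r' : ℝ) :
    Complex.I * r * (starRingEnd ℂ) (Complex.I * r') = r * r' := by
  rw [map_mul, Complex.conj_I, Complex.conj_ofReal]
  linear_combination (-(r : ℂ) * r') * Complex.I_mul_I

lemma integral_qKernel_mul_conj_qKernel (hq : |q| < 1) {r r' : ℝ} (hr : |r| < 1)
    (hr' : |r'| < 1) (x x' : ℝ) :
    ∫ y in (-1 : ℝ)..1, qKernel q (Complex.I * r) x y *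
        (starRingEnd ℂ) (qKernel q (Complex.I * r') y x') = qKernel q (r * r') x x' := by
  simp only [conj_qKernel]
  rw [integral_qKernel_mul_qKernel hq (by simpa using hr) (by simpa using hr'),
    I_mul_mul_conj_I_mul]

lemma integral_conj_qKernel_mul_integral_qKernel_mul_sum (hq : |q| < 1) {r r' : ℝ}
    (hr : |r| < 1) (hr' : |r'| < 1) (s : Finset ℕ) (c : ℕ → ℝ) (x : ℝ) :
    ∫ y in (-1 : ℝ)..1, (starRingEnd ℂ) (qKernel q (Complex.I * r') x y) *
        ∫ z in (-1 : ℝ)..1, qKernel q (Complex.I * r) y z * ((∑ n ∈ s, c n * qWave q n z : ℝ) : ℂ)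
      = ((∑ n ∈ s, c n * (r * r') ^ n * qWave q n x : ℝ) : ℂ) := by
  push_cast
  simp only [conj_qKernel]
  simp only [integral_qKernel_mul_sum hq (by simpa using hr : ‖Complex.I * r‖ < 1)]
  rw [integral_qKernel_mul_sum hq (by simpa using hr')]
  simp only [mul_assoc (c _ : ℂ), ← mul_pow, ← I_mul_mul_conj_I_mul r r']

end Kernel

theorem qKernel_inversion_general (q : ℝ) (hq : |q| < 1) :
    (∀ (r r' : ℝ), |r| < 1 → |r'| < 1 → ∀ x x' : ℝ,
      ∫ y in (-1 : ℝ)..1,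
          qKernel q (Complex.I * r) x y *
            (starRingEnd ℂ) (qKernel q (Complex.I * r') y x') =
        qKernel q ((r : ℂ) * (r' : ℂ)) x x') ∧
    (∀ (N : ℕ) (c : ℕ → ℝ) (x : ℝ),
      Filter.Tendsto
        (fun p : ℝ × ℝ =>
          ∫ y in (-1 : ℝ)..1,
            (starRingEnd ℂ) (qKernel q (Complex.I * p.2) x y) *
              ∫ z in (-1 : ℝ)..1,
                qKernel q (Complex.I * p.1) y z *
                  ((∑ n ∈ Finset.range N, c n * qWave q n z : ℝ) : ℂ))
        ((nhdsWithin 1 (Set.Iio 1)) ×ˢ (nhdsWithin 1 (Set.Iio 1)))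
        (nhds ((∑ n ∈ Finset.range N, c n * qWave q n x : ℝ) : ℂ))) := by
  refine ⟨fun r r' hr hr' => integral_qKernel_mul_conj_qKernel hq hr hr', fun N c x => ?_⟩
  have hlt : ∀ᶠ r : ℝ in 𝓝[<] 1, |r| < 1 := by
    filter_upwards [Ioo_mem_nhdsLT (by norm_num : (-1 : ℝ) < 1)] with r hr using abs_lt.2 hr
  have hcont : Continuous fun p : ℝ × ℝ =>
      ((∑ n ∈ Finset.range N, c n * (p.1 * p.2) ^ n * qWave q n x : ℝ) : ℂ) := by fun_prop
  have hlim := hcont.tendsto (1, 1)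
  rw [nhds_prod_eq] at hlim
  simp only [mul_one, one_pow] at hlim
  refine (hlim.mono_left (prod_mono nhdsWithin_le_nhds nhdsWithin_le_nhds)).congr' ?_
  filter_upwards [hlt.prod_mk hlt] with p hp
  exact (integral_conj_qKernel_mul_integral_qKernel_mul_sum hq hp.1 hp.2 _ c x).symm

/-- Inversion relation for the q-Fourier kernel, and recovery of finite linear
combinations of the wave functions in the limit `r, r' → 1⁻`. -/
theorem qKernel_inversion (q : ℝ) (hq0 : 0 < q) (hq1 : q < 1) :
    (∀ (r r' : ℝ), |r| < 1 → |r'| < 1 → ∀ x x' : ℝ,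
      ∫ y in (-1 : ℝ)..1,
          qKernel q (Complex.I * r) x y *
            (starRingEnd ℂ) (qKernel q (Complex.I * r') y x') =
        qKernel q ((r : ℂ) * (r' : ℂ)) x x') ∧
    (∀ (N : ℕ) (c : ℕ → ℝ) (x : ℝ),
      Filter.Tendsto
        (fun p : ℝ × ℝ =>
          ∫ y in (-1 : ℝ)..1,
            (starRingEnd ℂ) (qKernel q (Complex.I * p.2) x y) *
              ∫ z in (-1 : ℝ)..1,
                qKernel q (Complex.I * p.1) y z *
                  ((∑ n ∈ Finset.range N, c n * qWave q n z : ℝ) : ℂ))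
        ((nhdsWithin 1 (Set.Iio 1)) ×ˢ (nhdsWithin 1 (Set.Iio 1)))
        (nhds ((∑ n ∈ Finset.range N, c n * qWave q n x : ℝ) : ℂ))) :=
  qKernel_inversion_general q (abs_lt.2 ⟨by linarith, hq1⟩)
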